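/- Let U ⊆ ℂ be an open connected set containing 0, let σ : U → ℂ be holomorphic with σ(0) = 0 and σ'(z) ≠ 0 for every z ∈ U, let (m,n) be a pair of integers with (m,n) ≠ (0,0), and let c ∈ ℂ. If σ'(z)^m · conj(σ'(z))^n = c for all z ∈ U, then σ(z) = σ'(0)·z for all z ∈ U. -/

import Mathlib

open Complex

/-!
In the chart `w = exp z` the function `w ^ m * conj w ^ n` becomes `exp (m * z + n * conj z)`. It
is locally constant only if the real-linear exponent vanishes, that is, only if `m = n = 0`. By the
open mapping theorem, a nonconstant holomorphic germ `f` at `z₀` takes every value near `f z₀`, so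
`f ^ m * conj f ^ n` cannot be constant unless `f` is. Apply this to `f = σ'`.
-/

open Filter Topology ComplexConjugate

lemma exp_zpow_mul_conj_exp_zpow (z : ℂ) (m n : ℤ) :
    exp z ^ m * conj (exp z) ^ n = exp (m * z + n * conj z) := by
  rw [← exp_conj, ← exp_int_mul, ← exp_int_mul, ← exp_add]

lemma eq_zero_of_eventually_exp_eq {E : Type*} [NormedAddCommGroup E] [NormedSpace ℝ E]
    {L : E →L[ℝ] ℂ} {x₀ : E} {c : ℂ} (h : ∀ᶠ x in 𝓝 x₀, exp (L x) = c) : L = 0 := by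
  have hderiv : exp (L x₀) • L = 0 :=
    L.hasFDerivAt.cexp.unique ((hasFDerivAt_const c x₀).congr_of_eventuallyEq h)
  exact (smul_eq_zero.mp hderiv).resolve_left (exp_ne_zero _)

lemma eq_zero_of_forall_mul_add_mul_conj_eq_zero {a b : ℂ}
    (h : ∀ z : ℂ, a * z + b * conj z = 0) : a = 0 ∧ b = 0 := by
  have hadd : a + b = 0 := by simpa only [map_one, mul_one] using h 1
  have hsub : a - b = 0 := by
    have hI : (a - b) * I = 0 := by linear_combination h I - b * conj_I
    exact (mul_eq_zero.mp hI).resolve_right I_ne_zero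
  constructor
  · linear_combination (hadd + hsub) / 2
  · linear_combination (hadd - hsub) / 2

lemma eq_zero_of_eventually_zpow_mul_conj_zpow_eq {w₀ c : ℂ} (hw₀ : w₀ ≠ 0) {m n : ℤ}
    (h : ∀ᶠ w in 𝓝 w₀, w ^ m * conj w ^ n = c) : m = 0 ∧ n = 0 := by
  let L : ℂ →L[ℝ] ℂ := (m : ℂ) • .id ℝ ℂ + (n : ℂ) • conjCLE.toContinuousLinearMap
  have hexp : Tendsto exp (𝓝 (log w₀)) (𝓝 w₀) := by
    simpa only [exp_log hw₀] using continuous_exp.tendsto (log w₀)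
  have hconst : ∀ᶠ z in 𝓝 (log w₀), exp (L z) = c :=
    (hexp.eventually h).mono fun z hz => (exp_zpow_mul_conj_exp_zpow z m n).symm.trans hz
  have hL : L = 0 := eq_zero_of_eventually_exp_eq hconst
  have hlin : ∀ z : ℂ, (m : ℂ) * z + n * conj z = 0 := DFunLike.congr_fun hL
  exact_mod_cast eq_zero_of_forall_mul_add_mul_conj_eq_zero hlin

lemma eventually_eq_of_eventually_zpow_mul_conj_zpow_eq {f : ℂ → ℂ} {z₀ c : ℂ}
    (hf : AnalyticAt ℂ f z₀) (hf₀ : f z₀ ≠ 0) {m n : ℤ} (hmn : (m, n) ≠ (0, 0))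
    (h : ∀ᶠ z in 𝓝 z₀, f z ^ m * conj (f z) ^ n = c) : ∀ᶠ z in 𝓝 z₀, f z = f z₀ := by
  refine hf.eventually_constant_or_nhds_le_map_nhds.resolve_right fun hopen => hmn ?_
  exact Prod.ext_iff.mpr (eq_zero_of_eventually_zpow_mul_conj_zpow_eq hf₀ (hopen h))

lemma eqOn_affine_of_eventually_deriv_eq {f : ℂ → ℂ} {U : Set ℂ} {z₀ : ℂ} (hU : IsOpen U)
    (hUc : IsPreconnected U) (hz₀ : z₀ ∈ U) (hf : DifferentiableOn ℂ f U)
    (h : ∀ᶠ z in 𝓝 z₀, deriv f z = deriv f z₀) :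
    Set.EqOn f (fun z => f z₀ + deriv f z₀ * (z - z₀)) U := by
  have hconst : Set.EqOn (deriv f) (fun _ => deriv f z₀) U :=
    ((hf.deriv hU).analyticOnNhd hU).eqOn_of_preconnected_of_eventuallyEq
      analyticOnNhd_const hUc hz₀ h
  refine hU.eqOn_of_deriv_eq hUc hf (by fun_prop) (fun z hz => ?_) hz₀ (by simp)
  simpa using hconst hz

theorem linear_of_preserves_constant_differential_general
    {U : Set ℂ} (hU : IsOpen U) (hUc : IsPreconnected U) {z₀ : ℂ} (hz₀ : z₀ ∈ U)
    {σ : ℂ → ℂ} (hσ : DifferentiableOn ℂ σ U) (hσ' : deriv σ z₀ ≠ 0)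
    {m n : ℤ} (hmn : (m, n) ≠ (0, 0)) {c : ℂ}
    (hinv : ∀ᶠ z in 𝓝 z₀, deriv σ z ^ m * conj (deriv σ z) ^ n = c) :
    Set.EqOn σ (fun z => σ z₀ + deriv σ z₀ * (z - z₀)) U :=
  eqOn_affine_of_eventually_deriv_eq hU hUc hz₀ hσ <|
    eventually_eq_of_eventually_zpow_mul_conj_zpow_eq
      ((hσ.deriv hU).analyticAt (hU.mem_nhds hz₀)) hσ' hmn hinv

/-- A holomorphic map fixing `0` on an open connected neighborhood of `0` that preserves
the constant `(m,n)`-differential `dz^m dz̄^n` up to a multiplicative constant is the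
linear map `z ↦ σ'(0) z`. -/
theorem linear_of_preserves_constant_differential
    (U : Set ℂ) (hUo : IsOpen U) (hUc : IsConnected U) (h0 : (0 : ℂ) ∈ U)
    (σ : ℂ → ℂ) (hσ : DifferentiableOn ℂ σ U) (hσ0 : σ 0 = 0)
    (hσ' : ∀ z ∈ U, deriv σ z ≠ 0)
    (m n : ℤ) (hmn : (m, n) ≠ (0, 0)) (c : ℂ)
    (hinv : ∀ z ∈ U, (deriv σ z) ^ m * (starRingEnd ℂ (deriv σ z)) ^ n = c) :
    ∀ z ∈ U, σ z = deriv σ 0 * z := by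
  simpa only [Set.EqOn, hσ0, zero_add, sub_zero] using
    linear_of_preserves_constant_differential_general hUo hUc.isPreconnected h0 hσ (hσ' 0 h0) hmn
      (eventually_of_mem (hUo.mem_nhds h0) hinv)
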